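/- Let X be a uniformly convex real Banach space, let r be a Helly sequence for X, let k ≥ 1, let α ∈ (0,1], and set β = 1 − (1−α)^{1/k}. Let K_1, …, K_n be convex subsets of X with n ≥ k. If for at least α·(n choose k) of the k-element subsets J ⊆ {1,…,n} the intersection ⋂_{j∈J} K_j contains a point of the closed unit ball of X, then there exists x ∈ X such that dist(x, K_i) ≤ r_k holds for at least β·n of the indices i ∈ {1,…,n}. -/

import Mathlib

open scoped Classical

noncomputable section

/-- `y` is quasi-orthogonal to `x`: some nonzero continuous linear functional attains
its norm on `x` and vanishes on `y`. -/
def QuasiOrth {X : Type*} [NormedAddCommGroup X] [NormedSpace ℝ X] (y x : X) : Prop :=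
  ∃ f : X →L[ℝ] ℝ, f ≠ 0 ∧ f x = ‖f‖ * ‖x‖ ∧ f y = 0

/-- `ζ_X(ε) = inf {‖x + ε y‖ : ‖x‖ = ‖y‖ = 1, y ⌐ x}`. -/
def zetaConv (X : Type*) [NormedAddCommGroup X] [NormedSpace ℝ X] (ε : ℝ) : ℝ :=
  sInf {t : ℝ | ∃ x y : X, ‖x‖ = 1 ∧ ‖y‖ = 1 ∧ QuasiOrth y x ∧ t = ‖x + ε • y‖}

/-- `ζ⁺_X(ε) = sup {‖x + ε y‖ : ‖x‖ = ‖y‖ = 1, y ⌐ x}`. -/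
def zetaSmooth (X : Type*) [NormedAddCommGroup X] [NormedSpace ℝ X] (ε : ℝ) : ℝ :=
  sSup {t : ℝ | ∃ x y : X, ‖x‖ = 1 ∧ ‖y‖ = 1 ∧ QuasiOrth y x ∧ t = ‖x + ε • y‖}

/-- The modulus of convexity `δ_X(ε)`. -/
def modConv (X : Type*) [NormedAddCommGroup X] [NormedSpace ℝ X] (ε : ℝ) : ℝ :=
  sInf {t : ℝ | ∃ x y : X, ‖x‖ ≤ 1 ∧ ‖y‖ ≤ 1 ∧ ε ≤ ‖x - y‖ ∧ t = 1 - ‖x + y‖ / 2}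

/-- The modulus of smoothness `ρ_X(τ)`. -/
def modSmooth (X : Type*) [NormedAddCommGroup X] [NormedSpace ℝ X] (τ : ℝ) : ℝ :=
  sSup {t : ℝ | ∃ x y : X, ‖x‖ = 1 ∧ ‖y‖ = τ ∧ t = (‖x + y‖ + ‖x - y‖) / 2 - 1}

/-- `X` is uniformly convex: the modulus of convexity is positive on `(0, 2]`. -/
def UnifConvex (X : Type*) [NormedAddCommGroup X] [NormedSpace ℝ X] : Prop :=
  ∀ ε ∈ Set.Ioc (0 : ℝ) 2, 0 < modConv X ε

/-- `X` is uniformly smooth: `ρ_X(τ)/τ → 0` as `τ → 0⁺`. -/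
def UnifSmooth (X : Type*) [NormedAddCommGroup X] [NormedSpace ℝ X] : Prop :=
  Filter.Tendsto (fun τ => modSmooth X τ / τ) (nhdsWithin 0 (Set.Ioi 0)) (nhds 0)

/-- A Helly sequence for `X`: `r : {1,2,…} → (0,1]` with `r 1 = 1` and
`r (j+1) * ζ_X (r (j+1)) = r j` for all `j ≥ 1`. -/
def IsHellySeq (X : Type*) [NormedAddCommGroup X] [NormedSpace ℝ X] (r : ℕ → ℝ) : Prop :=
  (∀ j : ℕ, 1 ≤ j → r j ∈ Set.Ioc (0 : ℝ) 1) ∧ r 1 = 1 ∧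
    ∀ j : ℕ, 1 ≤ j → r (j + 1) * zetaConv X (r (j + 1)) = r j

end

section Helpers

variable {X : Type*} [NormedAddCommGroup X] [NormedSpace ℝ X]

lemma qo_one_le {x y : X} (hx : ‖x‖ = 1) (h : QuasiOrth y x) (e : ℝ) : 1 ≤ ‖x + e • y‖ := by
  obtain ⟨f, hf0, hfx, hfy⟩ := h
  have h1 : f (x + e • y) = ‖f‖ := by simp [hfx, hfy, hx]
  have h2 := f.le_opNorm (x + e • y)
  have h3 : 0 < ‖f‖ := norm_pos_iff.2 hf0
  rw [h1, Real.norm_of_nonneg h3.le] at h2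
  nlinarith

lemma zeta_le {x y : X} (hx : ‖x‖ = 1) (hy : ‖y‖ = 1) (h : QuasiOrth y x) (e : ℝ) :
    zetaConv X e ≤ ‖x + e • y‖ := by
  apply csInf_le
  · refine ⟨0, ?_⟩
    rintro t ⟨x, y, -, -, -, rfl⟩
    exact norm_nonneg _
  · exact ⟨x, y, hx, hy, h, rfl⟩

lemma le_zeta (hne : ∃ x y : X, ‖x‖ = 1 ∧ ‖y‖ = 1 ∧ QuasiOrth y x) {e c : ℝ}
    (h : ∀ x y : X, ‖x‖ = 1 → ‖y‖ = 1 → QuasiOrth y x → c ≤ ‖x + e • y‖) :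
    c ≤ zetaConv X e := by
  apply le_csInf
  · obtain ⟨x, y, hx, hy, hq⟩ := hne
    exact ⟨_, x, y, hx, hy, hq, rfl⟩
  · rintro t ⟨x, y, hx, hy, hq, rfl⟩
    exact h x y hx hy hq

lemma zeta_mono (hne : ∃ x y : X, ‖x‖ = 1 ∧ ‖y‖ = 1 ∧ QuasiOrth y x) {a b : ℝ}
    (ha : 0 ≤ a) (hab : a ≤ b) : zetaConv X a ≤ zetaConv X b := by
  rcases hab.eq_or_lt with rfl | hab
  · rfl
  have hb : 0 < b := ha.trans_lt hab
  refine le_zeta hne fun x y hx hy hq => (zeta_le hx hy hq a).trans ?_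
  have h1 := qo_one_le hx hq b
  have e : x + a • y = (1 - a / b) • x + (a / b) • (x + b • y) := by
    rw [smul_add, smul_smul, div_mul_cancel₀ _ hb.ne', sub_smul, one_smul]; abel
  have hl : 0 ≤ a / b := by positivity
  have hl1 : a / b ≤ 1 := (div_le_one hb).2 hab.le
  have := norm_add_le ((1 - a / b) • x) ((a / b) • (x + b • y))
  rw [← e, norm_smul, norm_smul, hx, Real.norm_of_nonneg hl,
    Real.norm_of_nonneg (by linarith)] at this
  nlinarith

lemma zeta_ratio (hne : ∃ x y : X, ‖x‖ = 1 ∧ ‖y‖ = 1 ∧ QuasiOrth y x) {s t : ℝ}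
    (ht : 0 < t) (hts : t < s) (hs : s ≤ 1) : t * zetaConv X s < s * zetaConv X t := by
  have key : (t * zetaConv X s + (s - t) * (1 - t)) / s ≤ zetaConv X t := by
    refine le_zeta hne fun x y hx hy hq => ?_
    rw [div_le_iff₀ (ht.trans hts)]
    have h1 := qo_one_le hx hq t
    have h2 := zeta_le hx hy hq s
    have e : x + s • y = (x + t • y) + (s - t) • y := by rw [sub_smul]; abel
    have := norm_add_le (x + t • y) ((s - t) • y)
    rw [← e, norm_smul, hy, Real.norm_of_nonneg (by linarith)] at this
    nlinarith [mul_le_mul_of_nonneg_left (h2.trans this) ht.le]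
  rw [div_le_iff₀ (ht.trans hts)] at key
  nlinarith [mul_pos (sub_pos.2 hts) (by linarith : 0 < 1 - t)]

lemma norm_normalize_aux {p : X} (hp : p ≠ 0) : ‖‖p‖⁻¹ • p‖ = 1 := by
  rw [norm_smul, norm_inv, norm_norm, inv_mul_cancel₀ (norm_ne_zero_iff.2 hp)]

lemma zeta_mul {p w : X} {f : X →L[ℝ] ℝ} (hp : p ≠ 0) (hf : f ≠ 0) (hfp : f p = ‖f‖ * ‖p‖)
    (hw : f w = f p) (hwp : w ≠ p) : ‖p‖ * zetaConv X (‖w - p‖ / ‖p‖) ≤ ‖w‖ := by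
  have hp' : 0 < ‖p‖ := norm_pos_iff.2 hp
  have hd : 0 < ‖w - p‖ := norm_pos_iff.2 (sub_ne_zero.2 hwp)
  have h := zeta_le (x := ‖p‖⁻¹ • p) (y := ‖w - p‖⁻¹ • (w - p)) (norm_normalize_aux hp) (by
    rw [norm_smul, norm_inv, norm_norm, inv_mul_cancel₀ hd.ne'])
    ⟨f, hf, by rw [norm_normalize_aux hp, map_smul, hfp, smul_eq_mul]; field_simp,
      by simp [hw]⟩ (‖w - p‖ / ‖p‖)
  have e : ‖p‖⁻¹ • p + (‖w - p‖ / ‖p‖) • ‖w - p‖⁻¹ • (w - p) = ‖p‖⁻¹ • w := by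
    rw [smul_smul, show ‖w - p‖ / ‖p‖ * ‖w - p‖⁻¹ = ‖p‖⁻¹ by field_simp, ← smul_add]
    congr 1; abel
  rw [e, norm_smul, norm_inv, norm_norm] at h
  calc _ ≤ ‖p‖ * (‖p‖⁻¹ * ‖w‖) := mul_le_mul_of_nonneg_left h hp'.le
    _ = ‖w‖ := by field_simp

lemma zeta_mul_ge (hne : ∃ x y : X, ‖x‖ = 1 ∧ ‖y‖ = 1 ∧ QuasiOrth y x)
    {p z : X} {f : X →L[ℝ] ℝ} (hp : p ≠ 0) (hf : f ≠ 0) (hfp : f p = ‖f‖ * ‖p‖)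
    (hz : f p ≤ f z) (hzp : z ≠ p) : ‖p‖ * zetaConv X (‖z - p‖ / ‖p‖) ≤ ‖z‖ := by
  have hp' : 0 < ‖p‖ := norm_pos_iff.2 hp
  have hf' : 0 < ‖f‖ := norm_pos_iff.2 hf
  have hfp0 : 0 < f p := by rw [hfp]; positivity
  have hD : 0 < ‖z - p‖ := norm_pos_iff.2 (sub_ne_zero.2 hzp)
  obtain ⟨c, hc⟩ : ∃ c, c = f z / f p := ⟨_, rfl⟩
  have hc1 : 1 ≤ c := by rw [hc, one_le_div hfp0]; exact hz
  have hc0 : 0 < c := by linarith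
  obtain ⟨q, hq⟩ : ∃ q, q = c⁻¹ • z := ⟨_, rfl⟩
  have hzq : z = c • q := by rw [hq, smul_smul, mul_inv_cancel₀ hc0.ne', one_smul]
  have hfq : f q = f p := by
    rw [hq, map_smul, smul_eq_mul, hc]; field_simp [(hfp0.trans_le hz).ne']
  have hpq : ‖p‖ ≤ ‖q‖ := by
    have := (le_abs_self _).trans (f.le_opNorm q)
    rw [hfq, hfp] at this
    exact le_of_mul_le_mul_left this hf'
  have hnz : ‖z‖ = c * ‖q‖ := by rw [hzq, norm_smul, Real.norm_of_nonneg hc0.le]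
  have hzmq : ‖z - q‖ = (c - 1) * ‖q‖ := by
    rw [show z - q = (c - 1) • q by rw [sub_smul, one_smul, ← hzq], norm_smul,
      Real.norm_of_nonneg (by linarith)]
  by_cases hqp : q = p
  · obtain ⟨x, y, hx, hy, hxy⟩ := hne
    have h1 := zeta_le hx hy hxy (‖z - p‖ / ‖p‖)
    have h2 := norm_add_le x ((‖z - p‖ / ‖p‖) • y)
    rw [norm_smul, hx, hy, Real.norm_of_nonneg (by positivity), mul_one] at h2
    subst hqp
    rw [hzmq] at h1 h2 ⊢
    rw [hnz]
    rw [mul_div_assoc, div_self hp'.ne', mul_one] at *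
    nlinarith
  · have hd : 0 < ‖q - p‖ := norm_pos_iff.2 (sub_ne_zero.2 hqp)
    obtain ⟨T, hT⟩ : ∃ T, T = ‖z - p‖ / ‖q - p‖ := ⟨_, rfl⟩
    have hT0 : 0 < T := by rw [hT]; positivity
    have hwd : ‖(p + T • (q - p)) - p‖ = ‖z - p‖ := by
      rw [add_sub_cancel_left, norm_smul, Real.norm_of_nonneg hT0.le, hT]; field_simp
    have h := zeta_mul (w := p + T • (q - p)) hp hf hfp (by simp [hfq]) (by
      intro h; rw [h, sub_self, norm_zero] at hwd; linarith)
    rw [hwd] at h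
    refine h.trans ?_
    have hqz : ‖q‖ ≤ ‖z‖ := by rw [hnz]; nlinarith
    rcases le_total T 1 with hT1 | hT1
    · have e : p + T • (q - p) = (1 - T) • p + T • q := by
        rw [smul_sub, sub_smul, one_smul]; abel
      have := norm_add_le ((1 - T) • p) (T • q)
      rw [e]
      rw [norm_smul, norm_smul, Real.norm_of_nonneg hT0.le,
        Real.norm_of_nonneg (by linarith)] at this
      nlinarith
    · have e : p + T • (q - p) = q + (T - 1) • (q - p) := by
        rw [sub_smul, one_smul]; abel
      have h1 := norm_add_le q ((T - 1) • (q - p))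
      rw [← e, norm_smul, Real.norm_of_nonneg (by linarith)] at h1
      have h2 : ‖z - p‖ ≤ ‖z - q‖ + ‖q - p‖ := by
        simpa using norm_add_le (z - q) (q - p)
      have h3 : ‖z - p‖ = T * ‖q - p‖ := by rw [hT]; field_simp
      nlinarith

lemma exists_support {C : Set X} (hC : Convex ℝ C) {x : X} (hxC : x ∈ closure C)
    (hmin : ∀ y ∈ C, ‖x‖ ≤ ‖y‖) (hx : x ≠ 0) :
    ∃ f : X →L[ℝ] ℝ, f ≠ 0 ∧ f x = ‖f‖ * ‖x‖ ∧ ∀ z ∈ closure C, f x ≤ f z := by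
  have hx' : 0 < ‖x‖ := norm_pos_iff.2 hx
  obtain ⟨f, s, hb, hc⟩ := geometric_hahn_banach_open (convex_ball (0 : X) ‖x‖)
    Metric.isOpen_ball hC (by
      rw [Set.disjoint_left]
      intro y hy hyC
      have := hmin y hyC
      rw [mem_ball_zero_iff] at hy
      linarith)
  have hc' : ∀ z ∈ closure C, s ≤ f z := fun z hz =>
    closure_minimal (t := {z | s ≤ f z}) hc (isClosed_le continuous_const f.continuous) hz
  have hb' : ∀ z, ‖z‖ ≤ ‖x‖ → f z ≤ s := by
    intro z hz
    have hz' : z ∈ closure (Metric.ball (0 : X) ‖x‖) := by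
      rw [closure_ball _ hx'.ne']; simpa using hz
    exact closure_minimal (t := {z | f z ≤ s}) (fun a ha => (hb a ha).le)
      (isClosed_le f.continuous continuous_const) hz'
  have hs : 0 < s := by simpa using hb 0 (by simpa using hx')
  have hfx : f x = s := le_antisymm (hb' x le_rfl) (hc' x hxC)
  refine ⟨f, ?_, ?_, fun z hz => hfx ▸ hc' z hz⟩
  · rintro rfl; simp at hfx; linarith
  · apply le_antisymm ((le_abs_self _).trans (f.le_opNorm x))
    rw [← le_div_iff₀ hx', hfx]
    refine f.opNorm_le_bound (by positivity) fun v => ?_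
    by_cases hv : v = 0
    · simp [hv]
    have hv' : 0 < ‖v‖ := norm_pos_iff.2 hv
    have hn : ‖(‖x‖ / ‖v‖) • v‖ = ‖x‖ := by
      rw [norm_smul, Real.norm_of_nonneg (by positivity)]; field_simp
    have h1 := hb' ((‖x‖ / ‖v‖) • v) hn.le
    have h2 := hb' (-((‖x‖ / ‖v‖) • v)) (by rw [norm_neg, hn])
    rw [map_neg] at h2
    rw [map_smul, smul_eq_mul] at h1 h2
    have h3 : ‖x‖ / ‖v‖ * |f v| ≤ s := by
      rcases abs_cases (f v) with h | h <;> rw [h.1] <;> linarith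
    rw [Real.norm_eq_abs]
    rw [div_mul_eq_mul_div, div_le_iff₀ hv'] at h3
    rw [div_mul_eq_mul_div, le_div_iff₀ hx']
    linarith

lemma exists_nearest [CompleteSpace X] (hX : UnifConvex X) {C : Set X} (hC : Convex ℝ C)
    (hne : C.Nonempty) : ∃ x ∈ closure C, ∀ y ∈ C, ‖x‖ ≤ ‖y‖ := by
  obtain ⟨d, hd⟩ : ∃ d, d = sInf (norm '' C) := ⟨_, rfl⟩
  have hbdd : BddBelow (norm '' C) := ⟨0, by rintro _ ⟨y, -, rfl⟩; exact norm_nonneg y⟩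
  have hdle : ∀ y ∈ C, d ≤ ‖y‖ := fun y hy => hd ▸ csInf_le hbdd ⟨y, hy, rfl⟩
  have hd0 : 0 ≤ d := hd ▸ le_csInf (hne.image _) (by rintro _ ⟨y, -, rfl⟩; exact norm_nonneg y)
  have hex : ∀ m : ℕ, ∃ u ∈ C, ‖u‖ < d + 1 / ((m : ℝ) + 1) := by
    intro m
    have : sInf (norm '' C) < d + 1 / ((m : ℝ) + 1) := by
      rw [← hd]; have : 0 < 1 / ((m : ℝ) + 1) := by positivity
      linarith
    obtain ⟨_, ⟨u, hu, rfl⟩, h⟩ := exists_lt_of_csInf_lt (hne.image _) this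
    exact ⟨u, hu, h⟩
  choose u huC hu using hex
  have hlim : Filter.Tendsto (fun m : ℕ => d + 1 / ((m : ℝ) + 1)) Filter.atTop (nhds d) := by
    simpa using tendsto_one_div_add_atTop_nhds_zero_nat.const_add d
  -- closeness
  have hclose : ∀ η > 0, ∃ R > d, ∀ a ∈ C, ∀ b ∈ C, ‖a‖ < R → ‖b‖ < R → ‖a - b‖ < η := by
    intro η hη
    rcases hd0.eq_or_lt with h0 | hdpos
    · refine ⟨η / 2, by linarith, fun a _ b _ ha hb => ?_⟩
      have := norm_sub_le a b
      linarith
    · obtain ⟨e, he⟩ : ∃ e, e = min (η / (2 * d)) 2 := ⟨_, rfl⟩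
      have he0 : 0 < e := by rw [he]; positivity
      have hδ := hX e ⟨he0, by rw [he]; exact min_le_right _ _⟩
      obtain ⟨δ, hδd⟩ : ∃ δ, δ = min (modConv X e) (1 / 2) := ⟨_, rfl⟩
      have hδ0 : 0 < δ := by rw [hδd]; positivity
      have hδ1 : δ ≤ modConv X e := by rw [hδd]; exact min_le_left _ _
      have hδ2 : δ ≤ 1 / 2 := by rw [hδd]; exact min_le_right _ _
      -- R with d ≤ R, 1 - d/R < δ, R ≤ 2 d
      refine ⟨d * (1 + δ), by nlinarith, fun a ha b hb hna hnb => ?_⟩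
      obtain ⟨R, hR⟩ : ∃ R, R = d * (1 + δ) := ⟨_, rfl⟩
      rw [← hR] at hna hnb
      have hR0 : 0 < R := by rw [hR]; positivity
      by_contra! hcon
      have hnR : ∀ v : X, ‖R⁻¹ • v‖ = ‖v‖ / R := fun v => by
        rw [norm_smul, norm_inv, Real.norm_of_nonneg hR0.le]; field_simp
      have hm : modConv X e ≤ 1 - ‖R⁻¹ • a + R⁻¹ • b‖ / 2 := by
        apply csInf_le
        · refine ⟨0, ?_⟩
          rintro t ⟨x, y, hx, hy, -, rfl⟩
          have := norm_add_le x y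
          linarith
        · refine ⟨_, _, ?_, ?_, ?_, rfl⟩
          · rw [hnR, div_le_one hR0]; exact hna.le
          · rw [hnR, div_le_one hR0]; exact hnb.le
          · rw [← smul_sub, hnR, he]
            refine (min_le_left _ _).trans ?_
            apply div_le_div₀ (by linarith) hcon hR0
            rw [hR]; nlinarith
      have hmid : d ≤ ‖(1 / 2 : ℝ) • a + (1 / 2 : ℝ) • b‖ :=
        hdle _ (hC ha hb (by norm_num) (by norm_num) (by norm_num))
      rw [← smul_add, norm_smul, Real.norm_of_nonneg (by norm_num)] at hmid
      rw [← smul_add, hnR] at hm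
      have h5 : (1 - δ) * R < d := by rw [hR]; nlinarith [mul_pos hδ0 hδ0]
      have h6 : ‖a + b‖ / R / 2 ≤ 1 - δ := by linarith
      rw [div_div, div_le_iff₀ (by positivity)] at h6
      nlinarith
  have hcau : CauchySeq u := by
    rw [Metric.cauchySeq_iff]
    intro η hη
    obtain ⟨R, hR, h⟩ := hclose η hη
    obtain ⟨N, hN⟩ := Filter.eventually_atTop.1 (hlim.eventually_lt_const hR)
    refine ⟨N, fun m hm l hl => ?_⟩
    rw [dist_eq_norm]
    exact h _ (huC m) _ (huC l) ((hu m).trans (hN m hm)) ((hu l).trans (hN l hl))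
  obtain ⟨x, hx⟩ := cauchySeq_tendsto_of_complete hcau
  refine ⟨x, mem_closure_of_tendsto hx (Filter.Eventually.of_forall huC), fun y hy => ?_⟩
  have : ‖x‖ ≤ d := le_of_tendsto_of_tendsto' hx.norm hlim (fun m => (hu m).le)
  exact this.trans (hdle y hy)

end Helpers

lemma comb_count {n k : ℕ} (hkn : k ≤ n) {γ : ℝ} (hγ : 0 ≤ γ) (P : Finset (Fin n) → Prop)
    (hstep : ∀ S : Finset (Fin n), P S → S.card < k →
      γ * ((n : ℝ) - S.card) ≤ ((Finset.univ.filter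
        (fun i => i ∉ S ∧ P (insert i S))).card : ℝ)) :
    ∀ m (S : Finset (Fin n)), S.card + m = k → P S →
      γ ^ m * ((n - S.card).choose m : ℝ) ≤
        (((Finset.univ.powersetCard k).filter (fun T => S ⊆ T ∧ P T)).card : ℝ) := by
  intro m
  induction m with
  | zero =>
    intro S hS hP
    simp only [pow_zero, Nat.choose_zero_right, Nat.cast_one, mul_one]
    have : 0 < ((Finset.univ.powersetCard k).filter (fun T => S ⊆ T ∧ P T)).card :=
      Finset.card_pos.2 ⟨S, by simp [Finset.mem_powersetCard, hP]; omega⟩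
    exact_mod_cast this
  | succ m ih =>
    intro S hS hP
    have hst := hstep S hP (by omega)
    obtain ⟨A, hA⟩ : ∃ A, A = Finset.univ.filter (fun i => i ∉ S ∧ P (insert i S)) := ⟨_, rfl⟩
    rw [← hA] at hst
    obtain ⟨F, hF⟩ : ∃ F, F = (Finset.univ.powersetCard k).filter (fun T => S ⊆ T ∧ P T) :=
      ⟨_, rfl⟩
    rw [← hF]
    have hdc : ∑ i ∈ A, (F.filter (fun T => i ∈ T)).card ≤ F.card * (m + 1) := by
      have := Finset.sum_card_bipartiteAbove_eq_sum_card_bipartiteBelow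
        (s := A) (t := F) (fun i T => i ∈ T)
      simp only [Finset.bipartiteAbove, Finset.bipartiteBelow] at this
      rw [this]
      rw [← smul_eq_mul]
      apply Finset.sum_le_card_nsmul
      intro T hT
      rw [hF, Finset.mem_filter, Finset.mem_powersetCard] at hT
      have hsub : A.filter (fun i => i ∈ T) ⊆ T \ S := by
        intro i hi
        rw [Finset.mem_filter, hA, Finset.mem_filter] at hi
        exact Finset.mem_sdiff.2 ⟨hi.2, hi.1.2.1⟩
      refine (Finset.card_le_card hsub).trans ?_
      rw [Finset.card_sdiff_of_subset hT.2.1]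
      omega
    have hlow : ∀ i ∈ A, γ ^ m * ((n - S.card - 1).choose m : ℝ) ≤
        ((F.filter (fun T => i ∈ T)).card : ℝ) := by
      intro i hi
      rw [hA, Finset.mem_filter] at hi
      have hc : (insert i S).card = S.card + 1 := Finset.card_insert_of_notMem hi.2.1
      have := ih (insert i S) (by omega) hi.2.2
      rw [hc, ← Nat.sub_sub] at this
      refine this.trans ?_
      norm_cast
      apply Finset.card_le_card
      intro T hT
      rw [Finset.mem_filter, Finset.insert_subset_iff] at hT
      rw [hF, Finset.mem_filter, Finset.mem_filter]
      exact ⟨⟨hT.1, hT.2.1.2, hT.2.2⟩, hT.2.1.1⟩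
    have hsum := Finset.card_nsmul_le_sum A _ _ hlow
    rw [nsmul_eq_mul] at hsum
    have hdc' : (∑ i ∈ A, ((F.filter (fun T => i ∈ T)).card : ℝ)) ≤ F.card * ((m : ℝ) + 1) := by
      exact_mod_cast hdc
    obtain ⟨N, hN⟩ : ∃ N, n - S.card = N + 1 := ⟨n - S.card - 1, by omega⟩
    have hNr : (n : ℝ) - S.card = (N : ℝ) + 1 := by
      have h : (n : ℝ) = N + 1 + S.card := by
        exact_mod_cast (by omega : n = N + 1 + S.card)
      rw [h]; ring
    rw [hN, Nat.add_sub_cancel] at hsum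
    rw [hNr] at hst
    rw [hN]
    have hch : ((N : ℝ) + 1) * (N.choose m : ℝ) = ((N + 1).choose (m + 1) : ℝ) * ((m : ℝ) + 1) := by
      exact_mod_cast Nat.add_one_mul_choose_eq N m
    have hpos : (0 : ℝ) < (m : ℝ) + 1 := by positivity
    refine le_of_mul_le_mul_right ?_ hpos
    calc γ ^ (m + 1) * ((N + 1).choose (m + 1) : ℝ) * ((m : ℝ) + 1)
        = (γ * ((N : ℝ) + 1)) * (γ ^ m * (N.choose m : ℝ)) := by
          rw [mul_assoc, ← hch]; ring
      _ ≤ A.card * (γ ^ m * (N.choose m : ℝ)) :=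
          mul_le_mul_of_nonneg_right hst (by positivity)
      _ ≤ _ := hsum.trans hdc'

/-- **No-dimensional fractional Helly theorem in uniformly convex Banach spaces.** -/
theorem no_dim_fractional_helly
    {X : Type*} [NormedAddCommGroup X] [NormedSpace ℝ X] [CompleteSpace X]
    (hX : UnifConvex X) {r : ℕ → ℝ} (hr : IsHellySeq X r)
    {k n : ℕ} (hk1 : 1 ≤ k) (hkn : k ≤ n)
    {α β : ℝ} (hα : α ∈ Set.Ioc (0 : ℝ) 1) (hβ : β = 1 - (1 - α) ^ ((1 : ℝ) / k))
    (K : Fin n → Set X) (hconv : ∀ i, Convex ℝ (K i))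
    (hfrac : α * (n.choose k) ≤
      (((Finset.univ : Finset (Fin n)).powersetCard k).filter
        (fun J => ∃ p ∈ Metric.closedBall (0 : X) 1, ∀ j ∈ J, p ∈ K j)).card) :
    ∃ x : X, β * n ≤
      ((Finset.univ : Finset (Fin n)).filter
        (fun i => Metric.infDist x (K i) ≤ r k)).card := by
  obtain ⟨hr01, hr1, hrec⟩ := hr
  have hne : ∃ x y : X, ‖x‖ = 1 ∧ ‖y‖ = 1 ∧ QuasiOrth y x := by
    by_contra hcon
    have h1 := hrec 1 le_rfl
    have : zetaConv X (r (1 + 1)) = 0 := by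
      unfold zetaConv
      convert Real.sInf_empty
      rw [Set.eq_empty_iff_forall_notMem]
      rintro t ⟨x, y, hx, hy, hq, -⟩
      exact hcon ⟨x, y, hx, hy, hq⟩
    rw [this, hr1] at h1
    norm_num at h1
  have hz1 : ∀ e, 1 ≤ zetaConv X e := fun e =>
    le_zeta hne fun x y hx _ hq => qo_one_le hx hq e
  have hdec : ∀ j, 1 ≤ j → r (j + 1) ≤ r j := by
    intro j hj
    have h1 := hrec j hj
    have h2 := (hr01 (j + 1) (by omega)).1
    nlinarith [hz1 (r (j + 1))]
  have hrk := (hr01 k hk1).1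
  have hk0 : (k : ℝ) ≠ 0 := by exact_mod_cast (by omega : k ≠ 0)
  have hn0 : 0 < n := by omega
  have hnr : (0 : ℝ) < n := by exact_mod_cast hn0
  by_contra! hcon
  -- the base ratio
  obtain ⟨g, hg⟩ : ∃ g : ℝ, g = (1 - α) ^ ((1 : ℝ) / k) := ⟨_, rfl⟩
  have hα1 : 0 ≤ 1 - α := by linarith [hα.2]
  have hg0 : 0 ≤ g := by rw [hg]; positivity
  have hgk : g ^ k = 1 - α := by
    rw [hg, ← Real.rpow_natCast, ← Real.rpow_mul hα1, one_div, inv_mul_cancel₀ hk0,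
      Real.rpow_one]
  rw [← hg] at hβ
  have hfar : ∀ x : X, g * n <
      ((Finset.univ.filter (fun i => r k < Metric.infDist x (K i))).card : ℝ) := by
    intro x
    have h1 := hcon x
    have h2 := Finset.card_filter_add_card_filter_not (s := (Finset.univ : Finset (Fin n)))
      (fun i => Metric.infDist x (K i) ≤ r k)
    simp only [not_le, Finset.card_univ, Fintype.card_fin] at h2
    have h3 : ((Finset.univ.filter (fun i => Metric.infDist x (K i) ≤ r k)).card : ℝ) +
      ((Finset.univ.filter (fun i => r k < Metric.infDist x (K i))).card : ℝ) = n := by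
      exact_mod_cast h2
    rw [hβ] at h1
    nlinarith
  obtain ⟨m0, hm0⟩ : ∃ m0, m0 = ⌊g * n⌋₊ + 1 := ⟨_, rfl⟩
  have hm0g : g * n < m0 := by rw [hm0]; push_cast; exact Nat.lt_floor_add_one _
  have hm0le : ∀ x : X,
      m0 ≤ (Finset.univ.filter (fun i => r k < Metric.infDist x (K i))).card := by
    intro x
    rw [hm0, Nat.add_one_le_iff, Nat.floor_lt (by positivity)]
    exact hfar x
  have hm0n : m0 ≤ n := (hm0le 0).trans ((Finset.card_filter_le _ _).trans (by simp))
  obtain ⟨G, hG⟩ : ∃ G : ℝ, G = m0 / n := ⟨_, rfl⟩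
  have hgG : g < G := by rw [hG, lt_div_iff₀ hnr]; exact hm0g
  have hG0 : 0 ≤ G := hg0.trans hgG.le
  have hG1 : G ≤ 1 := by rw [hG, div_le_one hnr]; exact_mod_cast hm0n
  have hGn : G * n = m0 := by rw [hG]; field_simp
  -- intersections
  obtain ⟨C, hC⟩ : ∃ C : Finset (Fin n) → Set X, C = fun S => {p | ∀ j ∈ S, p ∈ K j} :=
    ⟨_, rfl⟩
  have hCmem : ∀ S p, p ∈ C S ↔ ∀ j ∈ S, p ∈ K j := by intro S p; rw [hC]; rfl
  have hCconv : ∀ S, Convex ℝ (C S) := by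
    intro S
    have : C S = ⋂ j ∈ S, K j := by ext p; simp [hCmem]
    rw [this]
    exact convex_iInter₂ fun j _ => hconv j
  obtain ⟨P, hP⟩ : ∃ P : Finset (Fin n) → Prop, P = fun S =>
      (∀ p ∈ C S, ¬ ‖p‖ ≤ 1) ∨ ∃ x ∈ closure (C S), (∀ y ∈ C S, ‖x‖ ≤ ‖y‖) ∧
        (1 ≤ S.card → r k / r S.card < ‖x‖) := ⟨_, rfl⟩
  have hPempty : P ∅ := by
    rw [hP]
    right
    exact ⟨0, subset_closure (by simp [hCmem]), fun y _ => by simp, by simp⟩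
  have hstep : ∀ S : Finset (Fin n), P S → S.card < k →
      G * ((n : ℝ) - S.card) ≤ ((Finset.univ.filter
        (fun i => i ∉ S ∧ P (insert i S))).card : ℝ) := by
    intro S hS hSk
    have hsub : ∀ i, C (insert i S) ⊆ C S := fun i p hp => by
      rw [hCmem] at hp ⊢
      exact fun j hj => hp j (Finset.mem_insert_of_mem hj)
    have hS' := hS
    rw [hP] at hS'
    rcases hS' with hbad | ⟨x, hxC, hmin, hbig⟩
    · have : Finset.univ.filter (fun i => i ∉ S ∧ P (insert i S)) = Sᶜ := by
        ext i
        simp only [Finset.mem_filter, Finset.mem_univ, true_and, Finset.mem_compl,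
          and_iff_left_iff_imp]
        intro _
        rw [hP]
        exact Or.inl fun p hp => hbad p (hsub i hp)
      rw [this, Finset.card_compl, Fintype.card_fin, Nat.cast_sub (by omega)]
      have : (S.card : ℝ) < n := by exact_mod_cast (by omega : S.card < n)
      nlinarith
    · have h1 : (m0 : ℝ) ≤ ((Finset.univ.filter
          (fun i => i ∉ S ∧ P (insert i S))).card : ℝ) := by
        norm_cast
        refine (hm0le x).trans (Finset.card_le_card ?_)
        intro i hi
        rw [Finset.mem_filter] at hi ⊢
        have hi := hi.2
        refine ⟨Finset.mem_univ _, ?_, ?_⟩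
        · intro hiS
          have : x ∈ closure (K i) := closure_mono (fun p hp => (hCmem _ _).1 hp i hiS) hxC
          rw [Metric.infDist_zero_of_mem_closure this] at hi
          linarith
        · by_cases hb : ∀ p ∈ C (insert i S), ¬ ‖p‖ ≤ 1
          · rw [hP]; exact Or.inl hb
          push Not at hb
          obtain ⟨p, hp, -⟩ := hb
          obtain ⟨z, hzC, hzmin⟩ := exists_nearest hX (hCconv (insert i S)) ⟨p, hp⟩
          have hiS : i ∉ S := by
            intro hiS
            have : x ∈ closure (K i) := closure_mono (fun p hp => (hCmem _ _).1 hp i hiS) hxC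
            rw [Metric.infDist_zero_of_mem_closure this] at hi
            linarith
          rw [hP]
          refine Or.inr ⟨z, hzC, hzmin, fun _ => ?_⟩
          rw [Finset.card_insert_of_notMem hiS]
          have hzK : z ∈ closure (K i) :=
            closure_mono (fun p hp => (hCmem _ _).1 hp i (Finset.mem_insert_self _ _)) hzC
          have hzS : z ∈ closure (C S) := closure_mono (hsub i) hzC
          have hD : r k < ‖z - x‖ := by
            refine hi.trans_le ?_
            rw [← Metric.infDist_closure, ← dist_eq_norm, dist_comm]
            exact Metric.infDist_le_dist_of_mem hzK
          rcases Nat.eq_zero_or_pos S.card with h0 | hpos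
          · have hS0 : S = ∅ := Finset.card_eq_zero.1 h0
            have hx0 : x = 0 := by
              have := hmin 0 (by rw [hCmem, hS0]; simp)
              simpa using this
            rw [h0, zero_add, hr1, div_one]
            simpa [hx0] using hD
          · have hbig := hbig hpos
            obtain ⟨j, hj⟩ : ∃ j, j = S.card := ⟨_, rfl⟩
            rw [← hj] at hbig hpos ⊢
            obtain ⟨hj0, hj1⟩ := hr01 j hpos
            obtain ⟨hj0', hj1'⟩ := hr01 (j + 1) (by omega)
            have hxpos : 0 < ‖x‖ := lt_trans (by positivity) hbig
            have hx0 : x ≠ 0 := norm_pos_iff.1 hxpos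
            obtain ⟨f, hf0, hfx, hfz⟩ := exists_support (hCconv S) hxC hmin hx0
            have hzx : z ≠ x := by
              rintro rfl
              rw [sub_self, norm_zero] at hD
              linarith
            have hkey := zeta_mul_ge hne hx0 hf0 hfx (hfz z hzS) hzx
            have hmono := zeta_mono hne (a := r k / ‖x‖) (b := ‖z - x‖ / ‖x‖) (by positivity)
              (by gcongr)
            have hlt : r k / ‖x‖ < r j := by
              rw [div_lt_iff₀ hj0] at hbig
              rw [div_lt_iff₀ hxpos]; linarith
            have hrat := zeta_ratio hne (t := r k / ‖x‖) (by positivity) hlt hj1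
            have hm2 := zeta_mono hne hj0'.le (hdec j hpos)
            have hrj := hrec j hpos
            refine lt_of_lt_of_le ?_ (le_trans (mul_le_mul_of_nonneg_left hmono hxpos.le) hkey)
            rw [div_mul_eq_mul_div, div_lt_iff₀ hxpos] at hrat
            rw [div_lt_iff₀ hj0']
            -- r k < ‖x‖ ζ(t) r (j+1); r k ζ(r j) < r j ζ(t) ‖x‖
            have h5 : r k * r j ≤ r k * (r (j + 1) * zetaConv X (r j)) := by
              refine mul_le_mul_of_nonneg_left ?_ hrk.le
              exact hrj.symm.le.trans (mul_le_mul_of_nonneg_left hm2 hj0'.le)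
            have h6 := mul_lt_mul_of_pos_left hrat hj0'
            refine lt_of_mul_lt_mul_right (a := r j) ?_ hj0.le
            linarith
      have : (0 : ℝ) ≤ S.card := by positivity
      nlinarith
  have hcount := comb_count hkn hG0 P hstep k ∅ (by simp) hPempty
  simp only [Finset.card_empty, Nat.sub_zero, Finset.empty_subset, true_and] at hcount
  have hfil := Finset.card_filter_add_card_filter_not
    (s := (Finset.univ : Finset (Fin n)).powersetCard k)
    (fun J => ∃ p ∈ Metric.closedBall (0 : X) 1, ∀ j ∈ J, p ∈ K j)
  rw [Finset.card_powersetCard, Finset.card_univ, Fintype.card_fin] at hfil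
  have hbadle : ((Finset.univ.powersetCard k).filter (fun T => P T)).card ≤
      (((Finset.univ : Finset (Fin n)).powersetCard k).filter
        (fun J => ¬ ∃ p ∈ Metric.closedBall (0 : X) 1, ∀ j ∈ J, p ∈ K j)).card := by
    apply Finset.card_le_card
    intro T hT
    rw [Finset.mem_filter] at hT ⊢
    refine ⟨hT.1, ?_⟩
    rintro ⟨p, hp, hpK⟩
    rw [mem_closedBall_zero_iff] at hp
    have hTk := (Finset.mem_powersetCard.1 hT.1).2
    have hPT := hT.2
    rw [hP] at hPT
    rcases hPT with h | ⟨x, -, hmin, hbig⟩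
    · exact h p ((hCmem _ _).2 hpK) hp
    · have h1 := hbig (by omega)
      rw [hTk, div_self hrk.ne'] at h1
      have := hmin p ((hCmem _ _).2 hpK)
      linarith
  have hchoose : (0 : ℝ) < n.choose k := by exact_mod_cast Nat.choose_pos hkn
  have hpow : g ^ k < G ^ k := pow_lt_pow_left₀ hgG hg0 (by omega)
  rw [hgk] at hpow
  have hfil' : ((((Finset.univ : Finset (Fin n)).powersetCard k).filter
        (fun J => ∃ p ∈ Metric.closedBall (0 : X) 1, ∀ j ∈ J, p ∈ K j)).card : ℝ) +
      ((((Finset.univ : Finset (Fin n)).powersetCard k).filter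
        (fun J => ¬ ∃ p ∈ Metric.closedBall (0 : X) 1, ∀ j ∈ J, p ∈ K j)).card : ℝ) =
      n.choose k := by exact_mod_cast hfil
  have hbadle' : (((Finset.univ.powersetCard k).filter (fun T => P T)).card : ℝ) ≤
      ((((Finset.univ : Finset (Fin n)).powersetCard k).filter
        (fun J => ¬ ∃ p ∈ Metric.closedBall (0 : X) 1, ∀ j ∈ J, p ∈ K j)).card : ℝ) := by
    exact_mod_cast hbadle
  have h7 := mul_lt_mul_of_pos_right hpow hchoose
  linarith
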